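/- arXiv:2401.02434 — 2 statements merged into one kernel-verified Lean document; each statement's English description precedes it below -/
import Mathlib

section
/- Let k ≥ 1 and let a_1, …, a_k be positive integers with a_k ≥ 2, and let q = cf(a_1, …, a_k). Set M = (Σ_{i=1}^k a_i) − 1 and N = 1 + Σ_{i=1}^{k−1} 2^{(Σ_{j=1}^{i} a_j) − 1} (so N = 1 when k = 1). Then q occupies the N-th position in level M of the S-tree: there exists a bit string s of length M − 1 whose binary value is N − 1 such that S s = q. -/
/-- Helper computing the S-tree value from the reversed 0-1 sequence. -/
def Sa : List Bool → ℚ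
  | [] => 1/2
  | b :: t => if b then 1 / (1 + Sa t) else Sa t / (1 + Sa t)

/-- The S-tree map: `S [] = 1/2`, `S (s ++ [false]) = S s / (1 + S s)` and
`S (s ++ [true]) = 1 / (1 + S s)`. -/
def S (s : List Bool) : ℚ := Sa s.reverse

/-- Continued fraction value `cf [a₁, …, a_k] = 1/(a₁ + 1/(a₂ + ⋯ + 1/a_k))`. -/
def cf : List ℕ → ℚ
  | [] => 0
  | a :: t => 1 / ((a : ℚ) + cf t)

/-- Binary value of a 0-1 sequence, most significant bit first. -/
def binVal (s : List Bool) : ℕ := s.foldl (fun v b => 2 * v + (if b then 1 else 0)) 0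

/-!
On reciprocals the tree is additive: appending `false` to `s` turns `(S s)⁻¹` into `(S s)⁻¹ + 1`,
while appending `true` turns it into `S s + 1`. Hence `a - 2` zeros lead from the root `1 / 2` to
`1 / a`, and appending a `true` followed by `a - 1` zeros is one continued fraction step
`x ↦ 1 / (a + x)`. So `cf (a₁, …, a_k)` is reached by `a_k - 2` zeros followed by the blocks of
`a_{k-1}, …, a₁`. The leading zeros do not contribute to the binary value, and the `true` of the
block of `aᵢ` has `a₁ + ⋯ + aᵢ - 1` bits to its right.
-/

lemma S_nil : S [] = 1 / 2 := rfl

lemma S_append_false (s : List Bool) : S (s ++ [false]) = S s / (1 + S s) := by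
  simp [S, Sa]

lemma S_append_true (s : List Bool) : S (s ++ [true]) = 1 / (1 + S s) := by
  simp [S, Sa]

lemma S_pos (s : List Bool) : 0 < S s := by
  induction s using List.reverseRecOn with
  | nil => norm_num [S_nil]
  | append_singleton s b ih =>
    cases b
    · rw [S_append_false]
      positivity
    · rw [S_append_true]
      positivity

lemma inv_S_append_false (s : List Bool) : (S (s ++ [false]))⁻¹ = (S s)⁻¹ + 1 := by
  have hs : S s ≠ 0 := (S_pos s).ne'
  rw [S_append_false, inv_div, add_div, div_self hs, one_div]

lemma inv_S_append_true (s : List Bool) : (S (s ++ [true]))⁻¹ = S s + 1 := by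
  rw [S_append_true, one_div, inv_inv, add_comm]

lemma inv_S_append_replicate_false (s : List Bool) (n : ℕ) :
    (S (s ++ List.replicate n false))⁻¹ = (S s)⁻¹ + n := by
  induction n with
  | zero => simp
  | succ n ih =>
    rw [List.replicate_succ', ← List.append_assoc, inv_S_append_false, ih, Nat.cast_succ, add_assoc]

lemma inv_cf_cons (a : ℕ) (l : List ℕ) : (cf (a :: l))⁻¹ = a + cf l := by
  rw [cf, one_div, inv_inv]

lemma S_replicate_false (n : ℕ) : S (List.replicate n false) = cf [n + 2] := by
  apply inv_injective
  calc (S (List.replicate n false))⁻¹ = (S [])⁻¹ + n := inv_S_append_replicate_false [] n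
    _ = ((n + 2 : ℕ) : ℚ) + cf [] := by
      rw [S_nil, cf]
      push_cast
      ring
    _ = (cf [n + 2])⁻¹ := (inv_cf_cons _ _).symm

lemma S_append_true_replicate_false (s : List Bool) {a : ℕ} (ha : 0 < a) :
    S (s ++ true :: List.replicate (a - 1) false) = 1 / (a + S s) := by
  apply inv_injective
  rw [List.append_cons, inv_S_append_replicate_false, inv_S_append_true, one_div, inv_inv,
    Nat.cast_pred ha]
  ring

/-- The bit string that prepends the partial quotients `l` to the continued fraction of a vertex
when appended to the address of that vertex. The block of the first entry of `l` comes last,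
because the outermost continued fraction step is applied last. -/
def blockWord : List ℕ → List Bool
  | [] => []
  | a :: l => blockWord l ++ true :: List.replicate (a - 1) false

lemma length_blockWord {l : List ℕ} (hl : ∀ a ∈ l, 0 < a) : (blockWord l).length = l.sum := by
  induction l with
  | nil => rfl
  | cons a l ih =>
    obtain ⟨ha, hl⟩ := List.forall_mem_cons.mp hl
    rw [blockWord, List.length_append, ih hl, List.length_cons, List.length_replicate,
      List.sum_cons, Nat.sub_add_cancel ha, add_comm]

lemma S_append_blockWord {s : List Bool} {l t : List ℕ} (hl : ∀ a ∈ l, 0 < a)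
    (hs : S s = cf t) : S (s ++ blockWord l) = cf (l ++ t) := by
  induction l with
  | nil => simpa only [blockWord, List.append_nil, List.nil_append] using hs
  | cons a l ih =>
    obtain ⟨ha, hl⟩ := List.forall_mem_cons.mp hl
    rw [blockWord, ← List.append_assoc, S_append_true_replicate_false _ ha, ih hl,
      List.cons_append, cf]

lemma binVal_append_singleton (s : List Bool) (b : Bool) :
    binVal (s ++ [b]) = 2 * binVal s + if b then 1 else 0 := by
  simp only [binVal, List.foldl_append, List.foldl_cons, List.foldl_nil]

lemma binVal_append_replicate_false (s : List Bool) (n : ℕ) :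
    binVal (s ++ List.replicate n false) = 2 ^ n * binVal s := by
  induction n with
  | zero => simp
  | succ n ih =>
    rw [List.replicate_succ', ← List.append_assoc, binVal_append_singleton, ih, pow_succ']
    simp [mul_assoc]

lemma binVal_replicate_false (n : ℕ) : binVal (List.replicate n false) = 0 :=
  binVal_append_replicate_false [] n

lemma binVal_append_true_replicate_false (s : List Bool) {a : ℕ} (ha : 0 < a) :
    binVal (s ++ true :: List.replicate (a - 1) false) = 2 ^ a * binVal s + 2 ^ (a - 1) := by
  rw [List.append_cons, binVal_append_replicate_false, binVal_append_singleton, if_pos rfl,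
    mul_add_one, ← mul_assoc, pow_sub_one_mul ha.ne']

lemma sum_two_pow_sum_take_cons (a : ℕ) {l : List ℕ} (hl : ∀ b ∈ l, 0 < b) :
    ∑ i ∈ Finset.range (a :: l).length, 2 ^ (((a :: l).take (i + 1)).sum - 1) =
      2 ^ a * ∑ i ∈ Finset.range l.length, 2 ^ ((l.take (i + 1)).sum - 1) + 2 ^ (a - 1) := by
  rw [List.length_cons, Finset.sum_range_succ', Finset.mul_sum]
  congr 1
  refine Finset.sum_congr rfl fun i hi => ?_
  have take_ne_nil : l.take (i + 1) ≠ [] :=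
    List.ne_nil_of_length_pos (by rw [List.length_take]; grind)
  have sum_take_pos : 0 < (l.take (i + 1)).sum :=
    List.sum_pos _ (fun b hb => hl b (List.mem_of_mem_take hb)) take_ne_nil
  rw [List.take_succ_cons, List.sum_cons, Nat.add_sub_assoc sum_take_pos, pow_add]

lemma binVal_append_blockWord (s : List Bool) {l : List ℕ} (hl : ∀ a ∈ l, 0 < a) :
    binVal (s ++ blockWord l) =
      2 ^ l.sum * binVal s + ∑ i ∈ Finset.range l.length, 2 ^ ((l.take (i + 1)).sum - 1) := by
  induction l with
  | nil => simp [blockWord]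
  | cons a l ih =>
    obtain ⟨ha, hl⟩ := List.forall_mem_cons.mp hl
    rw [blockWord, ← List.append_assoc, binVal_append_true_replicate_false _ ha, ih hl,
      sum_two_pow_sum_take_cons a hl, List.sum_cons, pow_add]
    ring

/-- Locating theorem for the S-tree: for positive `a₁, …, a_k` (`k ≥ 1`) with `a_k ≥ 2`
and `q = cf (a₁, …, a_k)`, setting `M = (Σᵢ aᵢ) − 1` and
`N = 1 + Σ_{i=1}^{k−1} 2^{(Σ_{j=1}^{i} a_j) − 1}`, the rational `q` is the `N`-th vertex
in level `M` of the S-tree: there is a bit string `s` of length `M − 1` with binary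
value `N − 1` such that `S s = q`. -/
theorem stree_locating (l : List ℕ) (hne : l ≠ []) (hpos : ∀ a ∈ l, 0 < a)
    (hlast : 2 ≤ l.getLast hne) :
    ∃ s : List Bool,
      s.length = (l.sum - 1) - 1 ∧
      binVal s = (1 + ∑ i ∈ Finset.range (l.length - 1), 2 ^ ((l.take (i + 1)).sum - 1)) - 1 ∧
      S s = cf l := by
  obtain ⟨l, m, rfl⟩ : ∃ t m, l = t ++ [m] := ⟨_, _, (List.dropLast_append_getLast hne).symm⟩
  rw [List.getLast_append_singleton] at hlast
  obtain ⟨n, rfl⟩ := Nat.exists_eq_add_of_le' hlast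
  have hl : ∀ a ∈ l, 0 < a := fun a ha => hpos a (List.mem_append_left _ ha)
  refine ⟨List.replicate n false ++ blockWord l, ?_, ?_, ?_⟩
  · rw [List.length_append, List.length_replicate, length_blockWord hl, List.sum_append,
      List.sum_singleton]
    omega
  · rw [binVal_append_blockWord _ hl, binVal_replicate_false, mul_zero, zero_add,
      Nat.add_sub_cancel_left, List.length_append, List.length_singleton, Nat.add_sub_cancel]
    refine Finset.sum_congr rfl fun i hi => ?_
    rw [List.take_append_of_le_length (Finset.mem_range.mp hi)]
  · exact S_append_blockWord hl (S_replicate_false n)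
end

section
/- For all natural numbers a, b, c, d, the following are equivalent: (1) there exists a bit string s with H s = ((a,b),(c,d)) or H s = ((c,d),(a,b)); (2) (b·c : ℤ) − a·d = 1 or (b·c : ℤ) − a·d = −1. In the paper's language: two vertices a/b and c/d of the SC-tree are addable to each other (their mediant (a+c)/(b+d) is again produced as a vertex of the SC-tree, which happens exactly when the pair {a/b, c/d} occurs as the state at some position of the tree) if and only if bc − ad = ±1. -/
/-- Helper computing the SC-tree state from the reversed 0-1 sequence. -/
def Ha : List Bool → (ℕ × ℕ) × (ℕ × ℕ)
  | [] => ((1, 0), (0, 1))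
  | b :: t =>
      if b then ((Ha t).2, (Ha t).1 + (Ha t).2) else ((Ha t).1, (Ha t).1 + (Ha t).2)

/-- The SC-tree state map: `H [] = ((1,0),(0,1))` and, if `H s = (p, d)`, then
`H (s ++ [false]) = (p, p + d)` and `H (s ++ [true]) = (d, p + d)`. -/
def H (s : List Bool) : (ℕ × ℕ) × (ℕ × ℕ) := Ha s.reverse

/-- The SC-tree vertex at position `s`: the pair `p + d`, regarded as a fraction. -/
def V (s : List Bool) : ℕ × ℕ := (H s).1 + (H s).2

/-!
A step of the tree replaces the unordered state `{p, d}` by `{p, p + d}` or `{d, p + d}`, which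
preserves the determinant up to sign. Conversely, a pair of determinant `±1` whose vectors are
comparable arises by such a step from the pair obtained by subtracting the smaller vector from the
larger. This Euclidean descent stops only at incomparable vectors. If `(a, b)` and `(c, d)` satisfy
`c < a` and `b < d`, then `a * d - b * c ≥ (c + 1) * (b + 1) - b * c = b + c + 1`, so determinant
`±1` forces `b = c = 0` and `a = d = 1`, which is the root state.
-/

lemma H_nil : H [] = ((1, 0), (0, 1)) := rfl

lemma H_append_false (s : List Bool) : H (s ++ [false]) = ((H s).1, (H s).1 + (H s).2) := by
  simp [H, Ha]

lemma H_append_true (s : List Bool) : H (s ++ [true]) = ((H s).2, (H s).1 + (H s).2) := by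
  simp [H, Ha]

/-- The determinant `b * c - a * d` of the vectors `p = (a, b)` and `q = (c, d)`, with the sign
convention for which fractions `a / b < c / d` have positive determinant. -/
def crossDet (p q : ℕ × ℕ) : ℤ := p.2 * q.1 - p.1 * q.2

lemma crossDet_swap (p q : ℕ × ℕ) : crossDet q p = -crossDet p q := by
  simp only [crossDet]
  ring

lemma crossDet_add_right_self (p q : ℕ × ℕ) : crossDet p (p + q) = crossDet p q := by
  simp only [crossDet, Prod.fst_add, Prod.snd_add]
  push_cast
  ring

lemma crossDet_zero_left (q : ℕ × ℕ) : crossDet 0 q = 0 := by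
  simp [crossDet]

lemma isUnit_crossDet_comm {p q : ℕ × ℕ} : IsUnit (crossDet p q) ↔ IsUnit (crossDet q p) := by
  rw [crossDet_swap q p, IsUnit.neg_iff]

lemma isUnit_crossDet_H (s : List Bool) : IsUnit (crossDet (H s).1 (H s).2) := by
  induction s using List.reverseRecOn with
  | nil => simp [H_nil, crossDet]
  | append_singleton s b ih =>
    cases b with
    | false => rwa [H_append_false, crossDet_add_right_self]
    | true => rwa [H_append_true, add_comm, crossDet_add_right_self, isUnit_crossDet_comm]

/-- Two vectors are addable if, in one order or the other, they form the state at some position of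
the SC-tree, so that the tree takes their mediant. -/
def Addable (p q : ℕ × ℕ) : Prop := ∃ s, H s = (p, q) ∨ H s = (q, p)

namespace Addable

variable {p q : ℕ × ℕ}

lemma symm (h : Addable p q) : Addable q p :=
  h.imp fun _ => Or.symm

lemma self_add (h : Addable p q) : Addable p (p + q) := by
  obtain ⟨s, hs | hs⟩ := h
  · exact ⟨s ++ [false], .inl (by rw [H_append_false, hs])⟩
  · exact ⟨s ++ [true], .inl (by rw [H_append_true, hs, add_comm])⟩

lemma isUnit_crossDet (h : Addable p q) : IsUnit (crossDet p q) := by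
  obtain ⟨s, hs | hs⟩ := h
  · simpa only [hs] using isUnit_crossDet_H s
  · simpa only [hs] using isUnit_crossDet_comm.1 (isUnit_crossDet_H s)

end Addable

lemma addable_root : Addable (1, 0) (0, 1) :=
  ⟨[], .inl H_nil⟩

theorem subtractive_euclid_induction {M : Type*} [AddCommMonoid M] [PartialOrder M]
    [IsOrderedCancelAddMonoid M] [CanonicallyOrderedAdd M] [WellFoundedLT M]
    {P : M → M → Prop} (symm : ∀ p q, P p q → P q p) (zero_left : ∀ q, P 0 q)
    (self_add : ∀ p q, P p q → P p (p + q)) (incomp : ∀ p q, ¬p ≤ q → ¬q ≤ p → P p q)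
    (p q : M) : P p q := by
  suffices h : ∀ x : M × M, P x.1 x.2 from h (p, q)
  intro x
  induction x using WellFoundedLT.induction with
  | ind x ih =>
    obtain ⟨p, q⟩ := x
    by_cases hpq : p ≤ q
    · obtain ⟨r, rfl⟩ := exists_add_of_le hpq
      obtain rfl | hp := eq_zero_or_pos p
      · exact zero_left _
      · have hlt : (p, r) < (p, p + r) := Prod.mk_lt_mk_iff_right.2 (lt_add_of_pos_left r hp)
        exact self_add p r (ih _ hlt)
    by_cases hqp : q ≤ p
    · obtain ⟨r, rfl⟩ := exists_add_of_le hqp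
      obtain rfl | hq := eq_zero_or_pos q
      · exact symm _ _ (zero_left _)
      · have hlt : (r, q) < (q + r, q) := Prod.mk_lt_mk_iff_left.2 (lt_add_of_pos_left r hq)
        exact symm _ _ (self_add q r (symm _ _ (ih _ hlt)))
    exact incomp p q hpq hqp

lemma eq_unit_vectors_of_isUnit_crossDet {p q : ℕ × ℕ} (h : IsUnit (crossDet p q))
    (hfst : q.1 < p.1) (hsnd : p.2 < q.2) : p = (1, 0) ∧ q = (0, 1) := by
  obtain ⟨a, b⟩ := p
  obtain ⟨c, d⟩ := q
  have hmul : (c + 1) * (b + 1) ≤ a * d := Nat.mul_le_mul hfst hsnd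
  have hdet : a * d ≤ b * c + 1 := by
    rw [Int.isUnit_iff, crossDet] at h
    zify
    lia
  obtain ⟨rfl, rfl⟩ : b = 0 ∧ c = 0 := by constructor <;> nlinarith
  have had : a * d = 1 := by lia
  obtain ⟨rfl, rfl⟩ := mul_eq_one.1 had
  exact ⟨rfl, rfl⟩

lemma addable_of_isUnit_crossDet_of_not_le {p q : ℕ × ℕ} (h : IsUnit (crossDet p q))
    (hpq : ¬p ≤ q) (hqp : ¬q ≤ p) : Addable p q := by
  rw [Prod.le_def] at hpq hqp
  obtain ⟨hfst, hsnd⟩ | ⟨hfst, hsnd⟩ : q.1 < p.1 ∧ p.2 < q.2 ∨ p.1 < q.1 ∧ q.2 < p.2 := by lia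
  · obtain ⟨rfl, rfl⟩ := eq_unit_vectors_of_isUnit_crossDet h hfst hsnd
    exact addable_root
  · obtain ⟨rfl, rfl⟩ :=
      eq_unit_vectors_of_isUnit_crossDet (isUnit_crossDet_comm.1 h) hfst hsnd
    exact addable_root.symm

lemma addable_of_isUnit_crossDet (p q : ℕ × ℕ) : IsUnit (crossDet p q) → Addable p q := by
  induction p, q using subtractive_euclid_induction with
  | symm p q ih => exact fun h => (ih (isUnit_crossDet_comm.1 h)).symm
  | zero_left q => simp [crossDet_zero_left]
  | self_add p q ih =>
    rw [crossDet_add_right_self]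
    exact fun h => (ih h).self_add
  | incomp p q hpq hqp => exact fun h => addable_of_isUnit_crossDet_of_not_le h hpq hqp

theorem addable_iff_isUnit_crossDet {p q : ℕ × ℕ} : Addable p q ↔ IsUnit (crossDet p q) :=
  ⟨Addable.isUnit_crossDet, addable_of_isUnit_crossDet p q⟩

/-- Two vertices `a/b` and `c/d` of the SC-tree are addable to each other (the pair
`{a/b, c/d}` occurs as the state at some position of the tree, so that their mediant
`(a+c)/(b+d)` is produced as a vertex) if and only if `b*c − a*d = ±1`. -/
theorem sctree_addable_iff (a b c d : ℕ) :
    (∃ s : List Bool, H s = ((a, b), (c, d)) ∨ H s = ((c, d), (a, b))) ↔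
      ((b * c : ℤ) - (a * d : ℤ) = 1 ∨ (b * c : ℤ) - (a * d : ℤ) = -1) :=
  addable_iff_isUnit_crossDet.trans Int.isUnit_iff
end
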